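/- Let E₁ and E₂ be metrizable topological spaces with their Borel σ-algebras, let Ψ : E₁ × E₂ → ℝ be bounded and jointly Borel measurable, and let Φ₁, Φ₂ : E₁ × E₂ → ℝ be jointly Borel measurable. Let X¹ and X² be independent càdlàg processes with values in E₁ and E₂ such that for each x₂ ∈ E₂ the process t ↦ Ψ(X¹_t, x₂) − ∫₀ᵗ Φ₁(X¹_s, x₂) ds is a martingale with respect to the filtration generated by X¹ (with the integrability conditions E[|Ψ(X¹_t,x₂)|] < ∞ and ∫₀ᵗ E[|Φ₁(X¹_s,x₂)|] ds < ∞ for all t), and symmetrically for X² and Φ₂. Assume ∫₀ᵀ∫₀ᵀ E[|Φᵢ(X¹_s, X²_t)|] ds dt < ∞ for all T ≥ 0, i = 1,2. With R := Φ₁ − Φ₂, the integrated duality relation holds for every S > 0: ∫₀ˢ ( E[Ψ(X¹_T, X²_0)] − E[Ψ(X¹_0, X²_T)] ) dT = ∫₀ˢ ∫₀ᵀ E[R(X¹_t, X²_{T−t})] dt dT. -/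

import Mathlib

open MeasureTheory ProbabilityTheory Filter Set
open scoped NNReal ENNReal

lemma aux_joint {Ω E : Type*} [MeasurableSpace Ω] [TopologicalSpace E]
    [TopologicalSpace.MetrizableSpace E] [MeasurableSpace E] [BorelSpace E]
    (X : ℝ → Ω → E) (hm : ∀ t, Measurable (X t))
    (hrc : ∀ ω, ∀ t : ℝ, 0 ≤ t → ContinuousWithinAt (fun s => X s ω) (Ici t) t) :
    Measurable (fun p : ℝ × Ω => X (max p.1 0) p.2) := by
  refine measurable_of_tendsto_metrizable
    (f := fun (n : ℕ) (p : ℝ × Ω) =>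
      X (((⌊((n : ℝ) + 1) * max p.1 0⌋ : ℝ) + 1) / ((n : ℝ) + 1)) p.2) ?_ ?_
  · intro n
    have h1 : Measurable (fun q : ℤ × Ω => X (((q.1 : ℝ) + 1) / ((n : ℝ) + 1)) q.2) :=
      measurable_from_prod_countable_right (fun k => hm (((k : ℝ) + 1) / ((n : ℝ) + 1)))
    have h2 : Measurable (fun p : ℝ × Ω => ((⌊((n : ℝ) + 1) * max p.1 0⌋ : ℤ), p.2)) := by
      refine Measurable.prodMk (Int.measurable_floor.comp ?_) measurable_snd
      fun_prop
    exact h1.comp h2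
  · rw [tendsto_pi_nhds]
    rintro ⟨t, ω⟩
    have ht : (0 : ℝ) ≤ max t 0 := le_max_right _ _
    refine (hrc ω (max t 0) ht).tendsto.comp ?_
    generalize max t 0 = u
    have hlow : ∀ n : ℕ, u ≤ ((⌊((n : ℝ) + 1) * u⌋ : ℝ) + 1) / ((n : ℝ) + 1) := by
      intro n
      have hn : (0 : ℝ) < (n : ℝ) + 1 := by positivity
      rw [le_div_iff₀ hn]
      have := Int.lt_floor_add_one (((n : ℝ) + 1) * u)
      linarith
    have hup : ∀ n : ℕ, ((⌊((n : ℝ) + 1) * u⌋ : ℝ) + 1) / ((n : ℝ) + 1)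
        ≤ u + 1 / ((n : ℝ) + 1) := by
      intro n
      have hn : (0 : ℝ) < (n : ℝ) + 1 := by positivity
      rw [div_le_iff₀ hn]
      have := Int.floor_le (((n : ℝ) + 1) * u)
      have h3 : (u + 1 / ((n : ℝ) + 1)) * ((n : ℝ) + 1) = ((n : ℝ) + 1) * u + 1 := by
        field_simp
      linarith
    refine tendsto_nhdsWithin_iff.2 ⟨?_, Eventually.of_forall hlow⟩
    refine tendsto_of_tendsto_of_tendsto_of_le_of_le tendsto_const_nhds ?_ hlow hup
    simpa using tendsto_const_nhds.add (tendsto_one_div_add_atTop_nhds_zero_nat (𝕜 := ℝ))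

lemma aux_integrable {α β : Type*} [MeasurableSpace α] [MeasurableSpace β]
    {μ : Measure α} {ν : Measure β} [SFinite μ] [SFinite ν] {f : α × β → ℝ} (hf : Measurable f)
    (h : (∫⁻ a, ∫⁻ b, ENNReal.ofReal |f (a, b)| ∂ν ∂μ) < ⊤) : Integrable f (μ.prod ν) := by
  refine ⟨hf.aestronglyMeasurable, ?_⟩
  rw [hasFiniteIntegral_iff_norm, lintegral_prod _ (by fun_prop)]
  exact h

lemma aux_trans_l {Ω E₁ E₂ : Type*} [MeasurableSpace Ω] {P : Measure Ω} [IsProbabilityMeasure P]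
    [MeasurableSpace E₁] [MeasurableSpace E₂] {Y : Ω → E₁} {Z : Ω → E₂}
    (hY : Measurable Y) (hZ : Measurable Z) (hi : IndepFun Y Z P)
    {g : E₁ × E₂ → ℝ≥0∞} (hg : Measurable g) :
    ∫⁻ ω, g (Y ω, Z ω) ∂P = ∫⁻ ω', ∫⁻ ω, g (Y ω, Z ω') ∂P ∂P := by
  have h := (indepFun_iff_map_prod_eq_prod_map_map hY.aemeasurable hZ.aemeasurable).1 hi
  rw [← lintegral_map (f := g) hg (hY.prodMk hZ), h, lintegral_prod_symm _ hg.aemeasurable,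
    lintegral_map (hg.lintegral_prod_left') hZ]
  refine lintegral_congr fun ω' => ?_
  rw [lintegral_map (by fun_prop) hY]

lemma aux_trans_i {Ω E₁ E₂ : Type*} [MeasurableSpace Ω] {P : Measure Ω} [IsProbabilityMeasure P]
    [MeasurableSpace E₁] [MeasurableSpace E₂] {Y : Ω → E₁} {Z : Ω → E₂}
    (hY : Measurable Y) (hZ : Measurable Z) (hi : IndepFun Y Z P)
    {g : E₁ × E₂ → ℝ} (hg : Measurable g) (hint : Integrable (fun ω => g (Y ω, Z ω)) P) :
    ∫ ω, g (Y ω, Z ω) ∂P = ∫ ω', ∫ ω, g (Y ω, Z ω') ∂P ∂P := by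
  have h := (indepFun_iff_map_prod_eq_prod_map_map hY.aemeasurable hZ.aemeasurable).1 hi
  have hint' : Integrable g ((P.map Y).prod (P.map Z)) := by
    rw [← h]
    exact (integrable_map_measure hg.aestronglyMeasurable (hY.prodMk hZ).aemeasurable).2 hint
  rw [← integral_map (f := g) (hY.prodMk hZ).aemeasurable hg.aestronglyMeasurable, h,
    integral_prod_symm _ hint',
    integral_map hZ.aemeasurable (hg.stronglyMeasurable.integral_prod_left').aestronglyMeasurable]
  refine integral_congr_ae (Eventually.of_forall fun ω' => ?_)
  exact integral_map hY.aemeasurable (by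
    exact (hg.comp (measurable_id.prodMk measurable_const)).aestronglyMeasurable)

lemma aux_bdd {Ω : Type*} [MeasurableSpace Ω] {P : Measure Ω} [IsFiniteMeasure P]
    {f : Ω → ℝ} (hf : Measurable f) {C : ℝ} (hb : ∀ x, |f x| ≤ C) : Integrable f P :=
  Integrable.of_bound hf.aestronglyMeasurable C (Eventually.of_forall hb)

lemma aux_one {Ω E₁ E₂ : Type*} [MeasurableSpace Ω] {P : Measure Ω} [IsProbabilityMeasure P]
    [MeasurableSpace E₁] [MeasurableSpace E₂] {Y : ℝ → Ω → E₁} {Z : Ω → E₂}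
    (hY : Measurable (fun p : ℝ × Ω => Y p.1 p.2)) (hZ : Measurable Z)
    (hi : ∀ s, IndepFun (Y s) Z P) {Ψ Φ : E₁ × E₂ → ℝ} (hΨ : Measurable Ψ) (hΦ : Measurable Φ)
    {C : ℝ} (hb : ∀ x, |Ψ x| ≤ C) {T : ℝ} (hT : 0 ≤ T)
    (hE : ∀ x, (∫ ω, Ψ (Y T ω, x) ∂P) - ∫ ω, Ψ (Y 0 ω, x) ∂P
      = ∫ s in (0 : ℝ)..T, ∫ ω, Φ (Y s ω, x) ∂P)
    (hfin : (∫⁻ s in Icc (0 : ℝ) T, ∫⁻ ω, ENNReal.ofReal |Φ (Y s ω, Z ω)| ∂P) < ⊤) :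
    (∫ ω, Ψ (Y T ω, Z ω) ∂P) - ∫ ω, Ψ (Y 0 ω, Z ω) ∂P
      = ∫ s in (0 : ℝ)..T, ∫ ω, Φ (Y s ω, Z ω) ∂P := by
  have hYs : ∀ s, Measurable (Y s) := fun s => hY.comp (measurable_const.prodMk measurable_id)
  have hΨYZ : ∀ s, Measurable (fun ω => Ψ (Y s ω, Z ω)) := fun s =>
    hΨ.comp ((hYs s).prodMk hZ)
  have hΨP : ∀ s, Measurable (fun p : Ω × Ω => Ψ (Y s p.2, Z p.1)) := fun s =>
    hΨ.comp (((hYs s).comp measurable_snd).prodMk (hZ.comp measurable_fst))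
  have hΨI : ∀ s, Integrable (fun ω' => ∫ ω, Ψ (Y s ω, Z ω') ∂P) P := fun s =>
    (aux_bdd (P := P.prod P) (hΨP s) (fun _ => hb _)).integral_prod_left
  rw [aux_trans_i (hYs T) hZ (hi T) hΨ (aux_bdd (hΨYZ T) fun _ => hb _),
    aux_trans_i (hYs 0) hZ (hi 0) hΨ (aux_bdd (hΨYZ 0) fun _ => hb _),
    ← integral_sub (hΨI T) (hΨI 0)]
  simp_rw [hE]
  rw [Measure.restrict_congr_set Ioc_ae_eq_Icc.symm] at hfin
  simp_rw [intervalIntegral.integral_of_le hT]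
  have hΦm : Measurable (fun q : (ℝ × Ω) × Ω => Φ (Y q.1.1 q.2, Z q.1.2)) :=
    hΦ.comp ((hY.comp ((measurable_fst.comp measurable_fst).prodMk measurable_snd)).prodMk
      (hZ.comp (measurable_snd.comp measurable_fst)))
  have hΦm2 : Measurable (fun q : ℝ × Ω => Φ (Y q.1 q.2, Z q.2)) :=
    hΦ.comp (hY.prodMk (hZ.comp measurable_snd))
  have hH : Integrable (fun q : (ℝ × Ω) × Ω => Φ (Y q.1.1 q.2, Z q.1.2))
      (((volume.restrict (Ioc 0 T)).prod P).prod P) := by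
    refine aux_integrable hΦm ?_
    have hm : Measurable (fun q : (ℝ × Ω) × Ω => ENNReal.ofReal |Φ (Y q.1.1 q.2, Z q.1.2)|) := by
      fun_prop
    rw [lintegral_prod _ (hm.lintegral_prod_right').aemeasurable]
    refine lt_of_le_of_lt (lintegral_mono fun s => le_of_eq ?_) hfin
    exact (aux_trans_l (hYs s) hZ (hi s) (g := fun x => ENNReal.ofReal |Φ x|) (by fun_prop)).symm
  have hK : Integrable (fun q : ℝ × Ω => ∫ ω, Φ (Y q.1 ω, Z q.2) ∂P)
    ((volume.restrict (Ioc 0 T)).prod P) := hH.integral_prod_left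
  have h3 := integral_integral_swap (μ := volume.restrict (Ioc 0 T)) (ν := P)
    (f := fun s ω' => ∫ ω, Φ (Y s ω, Z ω') ∂P) hK
  rw [← h3]
  refine integral_congr_ae ?_
  filter_upwards [(aux_integrable hΦm2 hfin).prod_right_ae] with s hs
  exact (aux_trans_i (hYs s) hZ (hi s) hΦ hs).symm

def triB (S : ℝ) : Set (ℝ × ℝ) := {p | 0 < p.1 ∧ 0 < p.2 ∧ p.1 + p.2 ≤ S}

lemma triB_meas (S : ℝ) : MeasurableSet (triB S) := by
  unfold triB
  refine (measurableSet_lt measurable_const measurable_fst).inter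
    ((measurableSet_lt measurable_const measurable_snd).inter
    (measurableSet_le (measurable_fst.add measurable_snd) measurable_const))

lemma triB_sub (S : ℝ) : triB S ⊆ Ioc 0 S ×ˢ Ioc 0 S := by
  rintro ⟨u, v⟩ ⟨h1, h2, h3⟩
  simp only at h1 h2 h3
  exact ⟨⟨h1, by simp; linarith⟩, ⟨h2, by simp; linarith⟩⟩

lemma aux_tri {φ : ℝ × ℝ → ℝ} {S : ℝ} (hS : 0 ≤ S)
    (hφ : IntegrableOn φ (Ioc 0 S ×ˢ Ioc 0 S) (volume.prod volume)) :
    (∫ T in (0 : ℝ)..S, ∫ t in (0 : ℝ)..T, φ (t, T - t)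
      = ∫ p in triB S, φ p ∂(volume.prod volume)) ∧
    (∫ v in (0 : ℝ)..S, ∫ u in (0 : ℝ)..(S - v), φ (u, v)
      = ∫ p in triB S, φ p ∂(volume.prod volume)) ∧
    (∫ u in (0 : ℝ)..S, ∫ v in (0 : ℝ)..(S - u), φ (u, v)
      = ∫ p in triB S, φ p ∂(volume.prod volume)) := by
  have hg : Integrable ((triB S).indicator φ) (volume.prod volume) :=
    (hφ.mono_set (triB_sub S)).integrable_indicator (triB_meas S)
  rw [← integral_indicator (triB_meas S)]
  refine ⟨?_, ?_, ?_⟩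
  · have hmp := measurePreserving_prod_sub_swap (volume : Measure ℝ) (volume : Measure ℝ)
    have hg2 : Integrable (fun z : ℝ × ℝ => (triB S).indicator φ (z.2, z.1 - z.2))
        (volume.prod volume) := hmp.integrable_comp_of_integrable hg
    have h1 := integral_map (μ := (volume : Measure ℝ).prod (volume : Measure ℝ))
      hmp.measurable.aemeasurable (f := (triB S).indicator φ)
      (by rw [hmp.map_eq]; exact hg.aestronglyMeasurable)
    rw [hmp.map_eq] at h1
    rw [h1, integral_prod _ hg2, intervalIntegral.integral_of_le hS,
      ← integral_indicator measurableSet_Ioc]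
    refine integral_congr_ae (Eventually.of_forall fun T => ?_)
    by_cases hT : T ∈ Ioc 0 S
    · simp only [indicator_of_mem hT]
      rw [intervalIntegral.integral_of_le hT.1.le, integral_Ioc_eq_integral_Ioo,
        ← integral_indicator measurableSet_Ioo]
      congr 1
      funext t
      by_cases ht : t ∈ Ioo 0 T
      · rw [indicator_of_mem ht, indicator_of_mem]
        exact ⟨ht.1, by simpa using ht.2, by simpa using hT.2⟩
      · rw [indicator_of_notMem ht, indicator_of_notMem]
        rintro ⟨h1, h2, h3⟩
        exact ht ⟨h1, by simpa using h2⟩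
    · simp only [indicator_of_notMem hT]
      symm
      refine integral_eq_zero_of_ae (Eventually.of_forall fun t => ?_)
      simp only [Pi.zero_apply]
      rw [indicator_of_notMem]
      rintro ⟨h1, h2, h3⟩
      simp only at h1 h2 h3
      exact hT ⟨by linarith, by linarith⟩
  · rw [integral_prod_symm _ hg, intervalIntegral.integral_of_le hS,
      ← integral_indicator measurableSet_Ioc]
    refine integral_congr_ae (Eventually.of_forall fun v => ?_)
    by_cases hT : v ∈ Ioc 0 S
    · simp only [indicator_of_mem hT]
      rw [intervalIntegral.integral_of_le (by linarith [hT.2]),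
        ← integral_indicator measurableSet_Ioc]
      congr 1
      funext t
      by_cases ht : t ∈ Ioc 0 (S - v)
      · rw [indicator_of_mem ht, indicator_of_mem]
        exact ⟨ht.1, hT.1, by simp only; linarith [ht.2]⟩
      · rw [indicator_of_notMem ht, indicator_of_notMem]
        rintro ⟨h1, h2, h3⟩
        simp only at h1 h2 h3
        exact ht ⟨h1, by linarith⟩
    · simp only [indicator_of_notMem hT]
      symm
      refine integral_eq_zero_of_ae (Eventually.of_forall fun t => ?_)
      simp only [Pi.zero_apply]
      rw [indicator_of_notMem]
      rintro ⟨h1, h2, h3⟩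
      simp only at h1 h2 h3
      exact hT ⟨by linarith, by linarith⟩
  · rw [integral_prod _ hg, intervalIntegral.integral_of_le hS,
      ← integral_indicator measurableSet_Ioc]
    refine integral_congr_ae (Eventually.of_forall fun v => ?_)
    by_cases hT : v ∈ Ioc 0 S
    · simp only [indicator_of_mem hT]
      rw [intervalIntegral.integral_of_le (by linarith [hT.2]),
        ← integral_indicator measurableSet_Ioc]
      congr 1
      funext t
      by_cases ht : t ∈ Ioc 0 (S - v)
      · rw [indicator_of_mem ht, indicator_of_mem]
        exact ⟨hT.1, ht.1, by simp only; linarith [ht.2]⟩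
      · rw [indicator_of_notMem ht, indicator_of_notMem]
        rintro ⟨h1, h2, h3⟩
        simp only at h1 h2 h3
        exact ht ⟨h2, by linarith⟩
    · simp only [indicator_of_notMem hT]
      symm
      refine integral_eq_zero_of_ae (Eventually.of_forall fun t => ?_)
      simp only [Pi.zero_apply]
      rw [indicator_of_notMem]
      rintro ⟨h1, h2, h3⟩
      simp only at h1 h2 h3
      exact hT ⟨by linarith, by linarith⟩

lemma aux_det {φ φ₁ φ₂ : ℝ × ℝ → ℝ} {F : ℝ × ℝ → ℝ} {S C : ℝ} (hS : 0 ≤ S)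
    (hF : Measurable F) (hb : ∀ p, |F p| ≤ C)
    (hφ₁ : IntegrableOn φ₁ (Ioc 0 S ×ˢ Ioc 0 S) (volume.prod volume))
    (hφ₂ : IntegrableOn φ₂ (Ioc 0 S ×ˢ Ioc 0 S) (volume.prod volume))
    (hφ : ∀ᵐ p ∂((volume.prod volume).restrict (Ioc 0 S ×ˢ Ioc 0 S)), φ p = φ₁ p - φ₂ p)
    (h1 : ∀ᵐ v ∂(volume.restrict (Ioc 0 S)), ∀ T, 0 ≤ T → T ≤ S →
      F (T, v) - F (0, v) = ∫ u in (0 : ℝ)..T, φ₁ (u, v))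
    (h2 : ∀ᵐ u ∂(volume.restrict (Ioc 0 S)), ∀ T, 0 ≤ T → T ≤ S →
      F (u, T) - F (u, 0) = ∫ v in (0 : ℝ)..T, φ₂ (u, v)) :
    ∫ T in (0 : ℝ)..S, (F (T, 0) - F (0, T))
      = ∫ T in (0 : ℝ)..S, ∫ t in (0 : ℝ)..T, φ (t, T - t) := by
  have hφI : IntegrableOn φ (Ioc 0 S ×ˢ Ioc 0 S) (volume.prod volume) :=
    (hφ₁.sub hφ₂).congr (by filter_upwards [hφ] with p hp using by simp [hp])
  rw [(aux_tri hS hφI).1]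
  have e1 : ∫ p in triB S, φ p ∂(volume.prod volume)
      = ∫ p in triB S, (φ₁ p - φ₂ p) ∂(volume.prod volume) :=
    integral_congr_ae (ae_restrict_of_ae_restrict_of_subset (triB_sub S) hφ)
  have hFI : ∀ g : ℝ → ℝ × ℝ, Measurable g →
      IntervalIntegrable (fun x => F (g x)) volume 0 S := by
    intro g hg
    rw [intervalIntegrable_iff_integrableOn_Ioc_of_le hS]
    exact aux_bdd (hF.comp hg) (fun _ => hb _)
  rw [e1, integral_sub (hφ₁.mono_set (triB_sub S)) (hφ₂.mono_set (triB_sub S)),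
    ← (aux_tri hS hφ₁).2.1, ← (aux_tri hS hφ₂).2.2]
  have e2 : ∫ v in (0 : ℝ)..S, ∫ u in (0 : ℝ)..(S - v), φ₁ (u, v)
      = ∫ v in (0 : ℝ)..S, (F (S - v, v) - F (0, v)) := by
    rw [intervalIntegral.integral_of_le hS, intervalIntegral.integral_of_le hS]
    refine integral_congr_ae ?_
    filter_upwards [h1, ae_restrict_mem measurableSet_Ioc] with v hv hm
    exact (hv (S - v) (by linarith [hm.2]) (by linarith [hm.1])).symm
  have e3 : ∫ u in (0 : ℝ)..S, ∫ v in (0 : ℝ)..(S - u), φ₂ (u, v)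
      = ∫ u in (0 : ℝ)..S, (F (u, S - u) - F (u, 0)) := by
    rw [intervalIntegral.integral_of_le hS, intervalIntegral.integral_of_le hS]
    refine integral_congr_ae ?_
    filter_upwards [h2, ae_restrict_mem measurableSet_Ioc] with v hv hm
    exact (hv (S - v) (by linarith [hm.2]) (by linarith [hm.1])).symm
  have e4 : ∫ v in (0 : ℝ)..S, F (S - v, v) = ∫ u in (0 : ℝ)..S, F (u, S - u) := by
    have := intervalIntegral.integral_comp_sub_left (a := 0) (b := S)
      (fun u => F (u, S - u)) S
    simpa using this
  rw [e2, e3, intervalIntegral.integral_sub (hFI (fun x => (x, 0)) (by fun_prop))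
      (hFI (fun x => (0, x)) (by fun_prop)),
    intervalIntegral.integral_sub (hFI (fun x => (S - x, x)) (by fun_prop))
      (hFI (fun x => (0, x)) (by fun_prop)),
    intervalIntegral.integral_sub (hFI (fun x => (x, S - x)) (by fun_prop))
      (hFI (fun x => (x, 0)) (by fun_prop)), e4]
  ring

lemma aux_mart {Ω E : Type*} [MeasurableSpace Ω] {P : Measure Ω} [IsProbabilityMeasure P]
    [MeasurableSpace E] {Y : ℝ → Ω → E}
    (hY : Measurable (fun p : ℝ × Ω => Y p.1 p.2)) {ψ φ : E → ℝ} (hψ : Measurable ψ)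
    (hφ : Measurable φ) {C : ℝ} (hb : ∀ x, |ψ x| ≤ C) {T : ℝ} (hT : 0 ≤ T)
    (hfin : (∫⁻ s in Icc (0 : ℝ) T, ∫⁻ ω, ENNReal.ofReal |φ (Y s ω)| ∂P) < ⊤)
    (hM : ∫ ω, (ψ (Y T ω) - ∫ s in (0 : ℝ)..T, φ (Y s ω)) ∂P = ∫ ω, ψ (Y 0 ω) ∂P) :
    (∫ ω, ψ (Y T ω) ∂P) - ∫ ω, ψ (Y 0 ω) ∂P = ∫ s in (0 : ℝ)..T, ∫ ω, φ (Y s ω) ∂P := by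
  have hYs : ∀ s, Measurable (Y s) := fun s => hY.comp (measurable_const.prodMk measurable_id)
  rw [Measure.restrict_congr_set Ioc_ae_eq_Icc.symm] at hfin
  have hI := aux_integrable (f := fun p : ℝ × Ω => φ (Y p.1 p.2)) (hφ.comp hY) hfin
  simp_rw [intervalIntegral.integral_of_le hT] at hM ⊢
  have hA : Integrable (fun ω => ψ (Y T ω)) P := aux_bdd (hψ.comp (hYs T)) (fun _ => hb _)
  have hB : Integrable (fun ω => ∫ s in Ioc 0 T, φ (Y s ω)) P := hI.integral_prod_right
  rw [integral_sub hA hB] at hM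
  rw [integral_integral_swap (f := fun s ω => φ (Y s ω)) hI]
  linarith

lemma aux_core {Ω E₁ E₂ : Type*} [MeasurableSpace Ω] {P : Measure Ω} [IsProbabilityMeasure P]
    [MeasurableSpace E₁] [MeasurableSpace E₂] {Y₁ : ℝ → Ω → E₁} {Y₂ : ℝ → Ω → E₂}
    (hY₁ : Measurable (fun p : ℝ × Ω => Y₁ p.1 p.2))
    (hY₂ : Measurable (fun p : ℝ × Ω => Y₂ p.1 p.2))
    (hi : ∀ s t, IndepFun (Y₁ s) (Y₂ t) P) {Ψ Φ₁ Φ₂ : E₁ × E₂ → ℝ} (hΨ : Measurable Ψ)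
    (hΦ₁ : Measurable Φ₁) (hΦ₂ : Measurable Φ₂)
    {C : ℝ} (hb : ∀ x, |Ψ x| ≤ C) {S : ℝ} (hS : 0 ≤ S)
    (hE₁ : ∀ x, ∀ T, 0 ≤ T → (∫ ω, Ψ (Y₁ T ω, x) ∂P) - ∫ ω, Ψ (Y₁ 0 ω, x) ∂P
      = ∫ s in (0 : ℝ)..T, ∫ ω, Φ₁ (Y₁ s ω, x) ∂P)
    (hE₂ : ∀ x, ∀ T, 0 ≤ T → (∫ ω, Ψ (x, Y₂ T ω) ∂P) - ∫ ω, Ψ (x, Y₂ 0 ω) ∂P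
      = ∫ s in (0 : ℝ)..T, ∫ ω, Φ₂ (x, Y₂ s ω) ∂P)
    (hf₁ : (∫⁻ s in Icc (0 : ℝ) S, ∫⁻ t in Icc (0 : ℝ) S,
        ∫⁻ ω, ENNReal.ofReal |Φ₁ (Y₁ s ω, Y₂ t ω)| ∂P) < ⊤)
    (hf₂ : (∫⁻ s in Icc (0 : ℝ) S, ∫⁻ t in Icc (0 : ℝ) S,
        ∫⁻ ω, ENNReal.ofReal |Φ₂ (Y₁ s ω, Y₂ t ω)| ∂P) < ⊤) :
    ∫ T in (0 : ℝ)..S, ((∫ ω, Ψ (Y₁ T ω, Y₂ 0 ω) ∂P) - ∫ ω, Ψ (Y₁ 0 ω, Y₂ T ω) ∂P)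
        = ∫ T in (0 : ℝ)..S, ∫ t in (0 : ℝ)..T,
            ∫ ω, (Φ₁ (Y₁ t ω, Y₂ (T - t) ω) - Φ₂ (Y₁ t ω, Y₂ (T - t) ω)) ∂P := by
  have hY₁s : ∀ s, Measurable (Y₁ s) := fun s => hY₁.comp (measurable_const.prodMk measurable_id)
  have hY₂s : ∀ s, Measurable (Y₂ s) := fun s => hY₂.comp (measurable_const.prodMk measurable_id)
  have hYY : Measurable (fun q : (ℝ × ℝ) × Ω => (Y₁ q.1.1 q.2, Y₂ q.1.2 q.2)) :=
    (hY₁.comp ((measurable_fst.comp measurable_fst).prodMk measurable_snd)).prodMk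
      (hY₂.comp ((measurable_snd.comp measurable_fst).prodMk measurable_snd))
  have hlm : ∀ Φ : E₁ × E₂ → ℝ, Measurable Φ →
      Measurable (fun p : ℝ × ℝ => ∫⁻ ω, ENNReal.ofReal |Φ (Y₁ p.1 ω, Y₂ p.2 ω)| ∂P) := by
    intro Φ hΦ
    have : Measurable (fun q : (ℝ × ℝ) × Ω => ENNReal.ofReal |Φ (Y₁ q.1.1 q.2, Y₂ q.1.2 q.2)|) := by
      have := hΦ.comp hYY
      exact ENNReal.measurable_ofReal.comp this.abs
    exact this.lintegral_prod_right'
  have hH : ∀ Φ : E₁ × E₂ → ℝ, Measurable Φ →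
      (∫⁻ s in Icc (0 : ℝ) S, ∫⁻ t in Icc (0 : ℝ) S,
        ∫⁻ ω, ENNReal.ofReal |Φ (Y₁ s ω, Y₂ t ω)| ∂P) < ⊤ →
      Integrable (fun q : (ℝ × ℝ) × Ω => Φ (Y₁ q.1.1 q.2, Y₂ q.1.2 q.2))
        (((volume.prod volume).restrict (Ioc 0 S ×ˢ Ioc 0 S)).prod P) := by
    intro Φ hΦ hf
    refine aux_integrable (hΦ.comp hYY) ?_
    rw [← Measure.prod_restrict, lintegral_prod _ (hlm Φ hΦ).aemeasurable,
      Measure.restrict_congr_set Ioc_ae_eq_Icc]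
    exact hf
  have hH₁ := hH Φ₁ hΦ₁ hf₁
  have hH₂ := hH Φ₂ hΦ₂ hf₂
  have hFm : Measurable (fun p : ℝ × ℝ => ∫ ω, Ψ (Y₁ p.1 ω, Y₂ p.2 ω) ∂P) :=
    ((hΨ.comp hYY).stronglyMeasurable.integral_prod_right').measurable
  have hFb : ∀ p : ℝ × ℝ, |∫ ω, Ψ (Y₁ p.1 ω, Y₂ p.2 ω) ∂P| ≤ C := by
    intro p
    have := norm_integral_le_of_norm_le_const (μ := P)
      (f := fun ω => Ψ (Y₁ p.1 ω, Y₂ p.2 ω)) (Eventually.of_forall fun ω => hb _)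
    simpa using this
  refine aux_det (F := fun p : ℝ × ℝ => ∫ ω, Ψ (Y₁ p.1 ω, Y₂ p.2 ω) ∂P)
    (φ := fun p : ℝ × ℝ => ∫ ω, (Φ₁ (Y₁ p.1 ω, Y₂ p.2 ω) - Φ₂ (Y₁ p.1 ω, Y₂ p.2 ω)) ∂P)
    (φ₁ := fun p : ℝ × ℝ => ∫ ω, Φ₁ (Y₁ p.1 ω, Y₂ p.2 ω) ∂P)
    (φ₂ := fun p : ℝ × ℝ => ∫ ω, Φ₂ (Y₁ p.1 ω, Y₂ p.2 ω) ∂P)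
    hS hFm hFb hH₁.integral_prod_left hH₂.integral_prod_left ?_ ?_ ?_
  · filter_upwards [hH₁.prod_right_ae, hH₂.prod_right_ae] with p h1 h2
    exact integral_sub h1 h2
  · have hf := hf₁
    rw [lintegral_lintegral_swap (hlm Φ₁ hΦ₁).aemeasurable] at hf
    have hae := ae_lt_top ((hlm Φ₁ hΦ₁).lintegral_prod_left' (μ := volume.restrict (Icc 0 S))) hf.ne
    have hae' := ae_restrict_of_ae_restrict_of_subset Ioc_subset_Icc_self hae
    filter_upwards [hae'] with v hv T hT hTS
    exact aux_one hY₁ (hY₂s v) (fun s => hi s v) hΨ hΦ₁ hb hT (fun x => hE₁ x T hT)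
      (lt_of_le_of_lt (lintegral_mono_set (Icc_subset_Icc_right hTS)) hv)
  · have hae := ae_lt_top ((hlm Φ₂ hΦ₂).lintegral_prod_right' (ν := volume.restrict (Icc 0 S)))
      hf₂.ne
    have hae' := ae_restrict_of_ae_restrict_of_subset Ioc_subset_Icc_self hae
    filter_upwards [hae'] with u hu T hT hTS
    exact aux_one (Ψ := fun p => Ψ p.swap) (Φ := fun p => Φ₂ p.swap)
      hY₂ (hY₁s u) (fun s => (hi u s).symm) (hΨ.comp measurable_swap)
      (hΦ₂.comp measurable_swap) (fun _ => hb _) hT (fun x => hE₂ x T hT)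
      (lt_of_le_of_lt (lintegral_mono_set (Icc_subset_Icc_right hTS)) hu)

lemma aux_mart2 {Ω E : Type*} [MeasurableSpace Ω] {P : Measure Ω} [IsProbabilityMeasure P]
    [TopologicalSpace E] [TopologicalSpace.MetrizableSpace E]
    [MeasurableSpace E] [BorelSpace E] {X : ℝ → Ω → E} (hsm : ∀ t, StronglyMeasurable (X t))
    (hrc : ∀ ω, ∀ t : ℝ, 0 ≤ t → ContinuousWithinAt (fun s => X s ω) (Ici t) t)
    {ψ φ : E → ℝ} (hψ : Measurable ψ)
    (hφ : Measurable φ) {C : ℝ} (hb : ∀ x, |ψ x| ≤ C) {T : ℝ} (hT : 0 ≤ T)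
    (hfin : (∫⁻ s in Icc (0 : ℝ) T, ∫⁻ ω, ENNReal.ofReal |φ (X s ω)| ∂P) < ⊤)
    (hM : Martingale
      (fun (t : ℝ≥0) ω => ψ (X t ω) - ∫ s in (0 : ℝ)..(t : ℝ), φ (X s ω))
      (Filtration.natural (fun (t : ℝ≥0) => X t) (fun t => hsm t)) P) :
    (∫ ω, ψ (X (max T 0) ω) ∂P) - ∫ ω, ψ (X (max 0 0) ω) ∂P
      = ∫ s in (0 : ℝ)..T, ∫ ω, φ (X (max s 0) ω) ∂P := by
  refine aux_mart (Y := fun t => X (max t 0)) (aux_joint X (fun t => (hsm t).measurable) hrc)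
    hψ hφ hb hT ?_ ?_
  · refine lt_of_le_of_lt (le_of_eq ?_) hfin
    refine setLIntegral_congr_fun measurableSet_Icc fun s hs => ?_
    simp only [max_eq_left hs.1]
  · have h := hM.setIntegral_eq (i := 0) (j := ⟨T, hT⟩) zero_le MeasurableSet.univ
    simp only [Measure.restrict_univ, NNReal.coe_zero, intervalIntegral.integral_same,
      sub_zero, NNReal.coe_mk] at h
    rw [max_self, h, max_eq_left hT]
    refine integral_congr_ae (Eventually.of_forall fun ω => ?_)
    simp only
    congr 1
    refine intervalIntegral.integral_congr fun s hs => ?_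
    rw [uIcc_of_le hT] at hs
    simp only [max_eq_left hs.1]

/-- **Duality with error term** (Athreya–Swart, correction to "Branching-coalescing
particle systems", formula (1.8): integrated duality). -/
theorem integrated_duality
    {Ω : Type*} [MeasurableSpace Ω] (P : Measure Ω) [IsProbabilityMeasure P]
    {E₁ E₂ : Type*}
    [TopologicalSpace E₁] [TopologicalSpace.MetrizableSpace E₁]
    [MeasurableSpace E₁] [BorelSpace E₁]
    [TopologicalSpace E₂] [TopologicalSpace.MetrizableSpace E₂]
    [MeasurableSpace E₂] [BorelSpace E₂]
    (Ψ Φ₁ Φ₂ : E₁ × E₂ → ℝ)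
    (hΨm : Measurable Ψ) (C : ℝ) (hΨb : ∀ x, |Ψ x| ≤ C)
    (hΦ₁m : Measurable Φ₁) (hΦ₂m : Measurable Φ₂)
    (X₁ : ℝ → Ω → E₁) (X₂ : ℝ → Ω → E₂)
    (hX₁sm : ∀ t, StronglyMeasurable (X₁ t))
    (hX₂sm : ∀ t, StronglyMeasurable (X₂ t))
    -- càdlàg sample paths on [0,∞)
    (hX₁rc : ∀ ω, ∀ t : ℝ, 0 ≤ t → ContinuousWithinAt (fun s => X₁ s ω) (Ici t) t)
    (hX₁ll : ∀ ω, ∀ t : ℝ, 0 < t →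
      ∃ l, Tendsto (fun s => X₁ s ω) (nhdsWithin t (Iio t)) (nhds l))
    (hX₂rc : ∀ ω, ∀ t : ℝ, 0 ≤ t → ContinuousWithinAt (fun s => X₂ s ω) (Ici t) t)
    (hX₂ll : ∀ ω, ∀ t : ℝ, 0 < t →
      ∃ l, Tendsto (fun s => X₂ s ω) (nhdsWithin t (Iio t)) (nhds l))
    -- X¹ and X² are independent
    (hindep : IndepFun (fun ω t => X₁ t ω) (fun ω t => X₂ t ω) P)
    -- martingale problem for X¹ (with integrability), for every x₂
    (hΨint₁ : ∀ x₂, ∀ t : ℝ, 0 ≤ t → Integrable (fun ω => Ψ (X₁ t ω, x₂)) P)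
    (hΦint₁ : ∀ x₂, ∀ t : ℝ, 0 ≤ t →
      (∫⁻ s in Icc (0 : ℝ) t, ∫⁻ ω, ENNReal.ofReal |Φ₁ (X₁ s ω, x₂)| ∂P) < ⊤)
    (hmart₁ : ∀ x₂, Martingale
      (fun (t : ℝ≥0) ω => Ψ (X₁ t ω, x₂) - ∫ s in (0 : ℝ)..(t : ℝ), Φ₁ (X₁ s ω, x₂))
      (Filtration.natural (fun (t : ℝ≥0) => X₁ t) (fun t => hX₁sm t)) P)
    -- martingale problem for X² (with integrability), for every x₁
    (hΨint₂ : ∀ x₁, ∀ t : ℝ, 0 ≤ t → Integrable (fun ω => Ψ (x₁, X₂ t ω)) P)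
    (hΦint₂ : ∀ x₁, ∀ t : ℝ, 0 ≤ t →
      (∫⁻ s in Icc (0 : ℝ) t, ∫⁻ ω, ENNReal.ofReal |Φ₂ (x₁, X₂ s ω)| ∂P) < ⊤)
    (hmart₂ : ∀ x₁, Martingale
      (fun (t : ℝ≥0) ω => Ψ (x₁, X₂ t ω) - ∫ s in (0 : ℝ)..(t : ℝ), Φ₂ (x₁, X₂ s ω))
      (Filtration.natural (fun (t : ℝ≥0) => X₂ t) (fun t => hX₂sm t)) P)
    -- double integrability assumption (1.7)
    (hΦΦ₁ : ∀ T : ℝ, 0 ≤ T →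
      (∫⁻ s in Icc (0 : ℝ) T, ∫⁻ t in Icc (0 : ℝ) T,
        ∫⁻ ω, ENNReal.ofReal |Φ₁ (X₁ s ω, X₂ t ω)| ∂P) < ⊤)
    (hΦΦ₂ : ∀ T : ℝ, 0 ≤ T →
      (∫⁻ s in Icc (0 : ℝ) T, ∫⁻ t in Icc (0 : ℝ) T,
        ∫⁻ ω, ENNReal.ofReal |Φ₂ (X₁ s ω, X₂ t ω)| ∂P) < ⊤) :
    ∀ S : ℝ, 0 < S →
      ∫ T in (0 : ℝ)..S,
          ((∫ ω, Ψ (X₁ T ω, X₂ 0 ω) ∂P) - ∫ ω, Ψ (X₁ 0 ω, X₂ T ω) ∂P)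
        = ∫ T in (0 : ℝ)..S, ∫ t in (0 : ℝ)..T,
            ∫ ω, (Φ₁ (X₁ t ω, X₂ (T - t) ω) - Φ₂ (X₁ t ω, X₂ (T - t) ω)) ∂P := by
  intro S hS
  have hJ₁ := aux_joint X₁ (fun t => (hX₁sm t).measurable) hX₁rc
  have hJ₂ := aux_joint X₂ (fun t => (hX₂sm t).measurable) hX₂rc
  have key := aux_core (P := P) (Y₁ := fun t => X₁ (max t 0)) (Y₂ := fun t => X₂ (max t 0))
    hJ₁ hJ₂ (fun s t => hindep.comp (measurable_pi_apply (max s 0)) (measurable_pi_apply (max t 0)))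
    hΨm hΦ₁m hΦ₂m hΨb hS.le
    (fun x T hT => aux_mart2 hX₁sm hX₁rc (ψ := fun y => Ψ (y, x)) (φ := fun y => Φ₁ (y, x))
      (hΨm.comp (measurable_id.prodMk measurable_const))
      (hΦ₁m.comp (measurable_id.prodMk measurable_const)) (fun _ => hΨb _) hT
      (hΦint₁ x T hT) (hmart₁ x))
    (fun x T hT => aux_mart2 hX₂sm hX₂rc (ψ := fun y => Ψ (x, y)) (φ := fun y => Φ₂ (x, y))
      (hΨm.comp (measurable_const.prodMk measurable_id))
      (hΦ₂m.comp (measurable_const.prodMk measurable_id)) (fun _ => hΨb _) hT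
      (hΦint₂ x T hT) (hmart₂ x))
    (by
      refine lt_of_le_of_lt (le_of_eq ?_) (hΦΦ₁ S hS.le)
      refine setLIntegral_congr_fun measurableSet_Icc fun s hs => ?_
      refine setLIntegral_congr_fun measurableSet_Icc fun t ht => ?_
      simp only [max_eq_left hs.1, max_eq_left ht.1])
    (by
      refine lt_of_le_of_lt (le_of_eq ?_) (hΦΦ₂ S hS.le)
      refine setLIntegral_congr_fun measurableSet_Icc fun s hs => ?_
      refine setLIntegral_congr_fun measurableSet_Icc fun t ht => ?_
      simp only [max_eq_left hs.1, max_eq_left ht.1])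
  refine Eq.trans ?_ (key.trans ?_)
  · refine intervalIntegral.integral_congr fun T hT => ?_
    rw [uIcc_of_le hS.le] at hT
    simp only [max_eq_left hT.1, max_self]
  · refine intervalIntegral.integral_congr fun T hT => ?_
    rw [uIcc_of_le hS.le] at hT
    refine intervalIntegral.integral_congr fun t ht => ?_
    rw [uIcc_of_le hT.1] at ht
    simp only [max_eq_left ht.1, max_eq_left (sub_nonneg.2 ht.2)]
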